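/- arXiv:1411.0771 — 3 statements merged into one kernel-verified Lean document; each statement's English description precedes it below -/
import Mathlib

section
/- For all integers n ≥ 3 and e with n²/4 < e ≤ n(n−1)/2, we have t(n,e) ≤ Tr(n,e). -/
/-! The proof passes to weighted structures, where it is enough to treat minimal ones.

Let `R` (edges, loops allowed) and `P ⊆ R` (non-triangular edges) be symmetric relations on a finite
set such that the ends of a `P`-edge have no common `R`-neighbour (`Valid`). For weights `x ≥ 0`, let
`bil Q x x` be the sum of `x u * x v` over all ordered pairs with `Q u v`, which is twice the
weighted number of `Q`-edges. The claim (`core`) is that there are `a, b, c ≥ 0` with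
`a + b + c = ∑ x`, `bil R x x ≤ a² + 2ab + 2bc` and `bil P x x ≤ 2bc` (`Good`). For a graph with
all weights `1` this says that `e ≤ a²/2 + ab + bc` while at most `bc` edges are in no triangle,
so `t(n,e) ≤ e - bc ≤ Tr(G)`.

The main tool is a symmetrization for two quadratic forms at once (`reduce_two`). If there is a
two-dimensional space of weight changes of total zero on which both forms are nonnegative, then it
contains a nonzero `y` whose first-order effect on both forms is nonnegative. Moving along `y`
decreases neither form, and one stops when a weight vanishes; that vertex can be deleted.

Consider a counterexample with the fewest vertices, and take `R` maximal for the given `P`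
(`Crit`). Symmetrization shows that it has no three independent vertices. Fix a `P`-edge `uv`.

* Every other vertex is adjacent to exactly one of `u` and `v` (`Crit.noC`). Otherwise the structure
  is either a 5-cycle, where the weighted Mantel bound suffices (`Crit.five`), or it contains a
  `P`-path on four vertices with a looped vertex attached to its ends (`Crit.path`), which is
  reducible.
* So the vertices fall into two cliques, one containing `u` and one containing `v`. Three disjoint
  `P`-edges between the cliques (`Crit.match3`), or two together with a further looped vertex
  (`Crit.match2`), are reducible, and two with nothing else form a 4-cycle. Hence `uv` is the only
  `P`-edge between the cliques (`Crit.noCross`).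
* If `u` or `v` has another `P`-neighbour, the structure maps homomorphically to the extremal
  pattern `a, b, c` (`Crit.oneSide`, `Crit.noSide`). Otherwise `uv` is the only `P`-edge, and a
  four-class comparison finishes the proof (`good_four`).
-/

open scoped Classical

/-- An edge (as an element of `Sym2`) of `G` that lies in at least one triangle of `G`. -/
def triangularEdge {n : ℕ} (G : SimpleGraph (Fin n)) (e : Sym2 (Fin n)) : Prop :=
  ∃ u v : Fin n, e = s(u, v) ∧ G.Adj u v ∧ ∃ w, G.Adj u w ∧ G.Adj v w

/-- `Tr(G)`: the number of edges of `G` lying in at least one triangle. -/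
noncomputable def trCount {n : ℕ} (G : SimpleGraph (Fin n)) : ℕ :=
  {e ∈ G.edgeSet | triangularEdge G e}.ncard

/-- `Tr(n,e)`: the minimum of `Tr(G)` over simple graphs with `n` vertices and `e` edges. -/
noncomputable def TrNum (n e : ℕ) : ℕ :=
  sInf {m : ℕ | ∃ G : SimpleGraph (Fin n), G.edgeSet.ncard = e ∧ trCount G = m}

/-- `t(n,e) = inf {e - b*c : a,b,c ∈ ℝ≥0, a+b+c = n, a²/2 + ab + bc ≥ e}`. -/
noncomputable def tNum (n e : ℕ) : ℝ :=
  sInf {x : ℝ | ∃ a b c : ℝ, 0 ≤ a ∧ 0 ≤ b ∧ 0 ≤ c ∧ a + b + c = (n : ℝ) ∧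
    (e : ℝ) ≤ a ^ 2 / 2 + a * b + b * c ∧ x = (e : ℝ) - b * c}

/-! ### Weighted structures and homomorphisms -/

section
variable {V : Type} [Fintype V]

/-- The bilinear form of the relation `R`. `bil R x x` counts every unordered pair of distinct
`R`-related vertices twice and every loop once. -/
noncomputable def bil (R : V → V → Prop) (x y : V → ℝ) : ℝ :=
  ∑ u, ∑ v, if R u v then x u * y v else 0

/-- `R` is a graph with loops allowed and `P` a set of edges of `R` lying in no triangle of `R`.
Degenerate triangles count, so by `tri` with `w = u` the ends of a `P`-edge carry no loop. -/
structure Valid (R P : V → V → Prop) : Prop where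
  symR : ∀ u v, R u v → R v u
  symP : ∀ u v, P u v → P v u
  sub : ∀ u v, P u v → R u v
  tri : ∀ u v w, P u v → R u w → R v w → False

/-- The weighted structure `(x, R, P)` is dominated by an extremal pattern: a looped class `a`, joined
to a class `b`, which is joined to a class `c` by `P`-edges. The inequalities are doubled, as `bil`
counts ordered pairs. -/
def Good (x : V → ℝ) (R P : V → V → Prop) : Prop :=
  ∃ a b c : ℝ, 0 ≤ a ∧ 0 ≤ b ∧ 0 ≤ c ∧ a + b + c = ∑ v, x v ∧
    bil R x x ≤ a ^ 2 + 2 * a * b + 2 * b * c ∧ bil P x x ≤ 2 * b * c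

lemma bil_mono {R R' : V → V → Prop} {x : V → ℝ} (hx : ∀ v, 0 ≤ x v)
    (h : ∀ u v, R u v → R' u v) : bil R x x ≤ bil R' x x := by
  unfold bil
  refine Finset.sum_le_sum fun u _ => Finset.sum_le_sum fun v _ => ?_
  have := mul_nonneg (hx u) (hx v)
  by_cases h1 : R u v
  · simp [h1, h u v h1]
  · by_cases h2 : R' u v <;> simp [h1, h2, this]

lemma Good.mono {R R' P : V → V → Prop} {x : V → ℝ} (hx : ∀ v, 0 ≤ x v)
    (h : ∀ u v, R u v → R' u v) (hg : Good x R' P) : Good x R P := by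
  obtain ⟨a, b, c, ha, hb, hc, hs, h1, h2⟩ := hg
  exact ⟨a, b, c, ha, hb, hc, hs, (bil_mono hx h).trans h1, h2⟩

/-- The push-forward of the weights `x` along `φ`: each point gets the total weight of its fibre. -/
noncomputable def push {W : Type} (φ : V → W) (x : V → ℝ) : W → ℝ :=
  fun i => ∑ v with φ v = i, x v

lemma push_nonneg {W : Type} (φ : V → W) {x : V → ℝ} (hx : ∀ v, 0 ≤ x v) (i : W) :
    0 ≤ push φ x i :=
  Finset.sum_nonneg fun v _ => hx v

lemma sum_push {W : Type} [Fintype W] (φ : V → W) (x : V → ℝ) :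
    ∑ i, push φ x i = ∑ v, x v :=
  Finset.sum_fiberwise _ _ _

lemma bil_push {W : Type} [Fintype W] (φ : V → W) (Q : W → W → Prop) (x : V → ℝ) :
    bil (fun u v => Q (φ u) (φ v)) x x = bil Q (push φ x) (push φ x) := by
  unfold bil push
  rw [← Finset.sum_fiberwise Finset.univ φ]
  refine Finset.sum_congr rfl fun i _ => ?_
  have : ∀ u ∈ Finset.univ.filter (fun u => φ u = i),
      (∑ v, if Q (φ u) (φ v) then x u * x v else 0)
        = x u * ∑ j, if Q i j then ∑ v with φ v = j, x v else 0 := by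
    intro u hu
    have hu : φ u = i := by simpa using hu
    rw [← Finset.sum_fiberwise Finset.univ φ, Finset.mul_sum]
    refine Finset.sum_congr rfl fun j _ => ?_
    by_cases hq : Q i j
    · rw [if_pos hq, Finset.mul_sum]
      refine Finset.sum_congr rfl fun v hv => ?_
      have hv : φ v = j := by simpa using hv
      simp [hu, hv, hq]
    · rw [if_neg hq, mul_zero]
      refine Finset.sum_eq_zero fun v hv => ?_
      have hv : φ v = j := by simpa using hv
      simp [hu, hv, hq]
  rw [Finset.sum_congr rfl this, ← Finset.sum_mul, Finset.mul_sum]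
  refine Finset.sum_congr rfl fun j _ => ?_
  split_ifs <;> simp

lemma bil_le_push {W : Type} [Fintype W] {R : V → V → Prop} (φ : V → W) (Q : W → W → Prop)
    {x : V → ℝ} (hx : ∀ v, 0 ≤ x v) (h : ∀ u v, R u v → Q (φ u) (φ v)) :
    bil R x x ≤ bil Q (push φ x) (push φ x) := by
  rw [← bil_push]
  exact bil_mono hx h

/-- Being dominated by an extremal pattern is inherited along homomorphisms of pairs `(R, P)`. -/
lemma Good.of_hom {W : Type} [Fintype W] {R P : V → V → Prop} (φ : V → W) (R' P' : W → W → Prop)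
    {x : V → ℝ} (hx : ∀ v, 0 ≤ x v) (h : ∀ u v, R u v → R' (φ u) (φ v))
    (h' : ∀ u v, P u v → P' (φ u) (φ v))
    (hg : ∀ X : W → ℝ, (∀ i, 0 ≤ X i) → Good X R' P') : Good x R P := by
  obtain ⟨a, b, c, ha, hb, hc, hs, h1, h2⟩ := hg (push φ x) (push_nonneg φ hx)
  refine ⟨a, b, c, ha, hb, hc, ?_, (bil_le_push φ R' hx h).trans h1,
    (bil_le_push φ P' hx h').trans h2⟩
  rw [hs, sum_push]

/-! ### Symmetrization -/

lemma bil_add_smul {R : V → V → Prop} (hR : ∀ u v, R u v → R v u) (x y : V → ℝ) (t : ℝ) :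
    bil R (fun v => x v + t * y v) (fun v => x v + t * y v) =
      bil R x x + 2 * t * bil R x y + t ^ 2 * bil R y y := by
  have hsym : bil R y x = bil R x y := by
    unfold bil
    rw [Finset.sum_comm]
    refine Finset.sum_congr rfl fun u _ => Finset.sum_congr rfl fun v _ => ?_
    have : R v u ↔ R u v := ⟨hR _ _, hR _ _⟩
    simp [this, mul_comm]
  have : bil R (fun v => x v + t * y v) (fun v => x v + t * y v) =
      bil R x x + t * bil R x y + t * bil R y x + t ^ 2 * bil R y y := by
    unfold bil
    simp only [Finset.mul_sum, ← Finset.sum_add_distrib]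
    refine Finset.sum_congr rfl fun u _ => Finset.sum_congr rfl fun v _ => ?_
    split_ifs <;> ring
  rw [this, hsym]; ring

/-- Moving the weights along `y` decreases neither form, and can be continued until a weight
vanishes. -/
lemma reduce_one {R P : V → V → Prop} (hV : Valid R P) {x : V → ℝ} (hx : ∀ v, 0 ≤ x v)
    (IH : ∀ (w : V) (x' : V → ℝ), (∀ v, 0 ≤ x' v) → x' w = 0 → Good x' R P)
    (y : V → ℝ) (hy : ∃ v, y v ≠ 0) (hsum : ∑ v, y v = 0)
    (h1 : 0 ≤ bil R y y) (h2 : 0 ≤ bil P y y)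
    (h3 : 0 ≤ bil R x y) (h4 : 0 ≤ bil P x y) : Good x R P := by
  have hneg : ∃ v, y v < 0 := by
    by_contra! hcon
    obtain ⟨v, hv⟩ := hy
    exact hv ((Finset.sum_eq_zero_iff_of_nonneg fun v _ => hcon v).1 hsum v (Finset.mem_univ v))
  -- `w` is the vertex whose weight vanishes first along `x + t * y`.
  obtain ⟨w, hw, hmin⟩ := Finset.exists_min_image (Finset.univ.filter fun v => y v < 0)
    (fun v => x v / (- y v)) (by obtain ⟨v, hv⟩ := hneg; exact ⟨v, by simpa using hv⟩)
  have hw : y w < 0 := by simpa using hw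
  set t := x w / (- y w) with ht
  have ht0 : 0 ≤ t := div_nonneg (hx w) (by linarith)
  obtain ⟨a, b, c, ha, hb, hc, hs, g1, g2⟩ := IH w (fun v => x v + t * y v) (by
    intro v
    rcases lt_or_ge (y v) 0 with hv | hv
    · have := hmin v (by simpa using hv)
      rw [le_div_iff₀ (by linarith)] at this
      linarith
    · have := hx v
      positivity) (by
      have : y w ≠ 0 := hw.ne
      simp only [ht]; field_simp; ring)
  rw [bil_add_smul hV.symR] at g1
  rw [bil_add_smul hV.symP] at g2
  refine ⟨a, b, c, ha, hb, hc, ?_, ?_, ?_⟩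
  · rw [hs, Finset.sum_add_distrib, ← Finset.mul_sum, hsum]; ring
  · have : 0 ≤ 2 * t * bil R x y + t ^ 2 * bil R y y := by positivity
    linarith
  · have : 0 ≤ 2 * t * bil P x y + t ^ 2 * bil P y y := by positivity
    linarith

lemma bil_comb {k : ℕ} (R : V → V → Prop) (f : Fin k → V) (c : Fin k → ℝ) :
    bil R (fun v => ∑ i, if v = f i then c i else 0) (fun v => ∑ i, if v = f i then c i else 0) =
      ∑ i, ∑ j, if R (f i) (f j) then c i * c j else 0 := by
  unfold bil
  have key : ∀ u v, (if R u v then (∑ i, if u = f i then c i else 0) *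
      (∑ j, if v = f j then c j else 0) else 0) =
      ∑ i, ∑ j, if u = f i then (if v = f j then (if R (f i) (f j) then c i * c j else 0) else 0)
        else 0 := by
    intro u v
    by_cases h : R u v
    · rw [if_pos h, Finset.sum_mul_sum]
      refine Finset.sum_congr rfl fun i _ => Finset.sum_congr rfl fun j _ => ?_
      by_cases h1 : u = f i <;> by_cases h2 : v = f j <;> simp_all
    · rw [if_neg h]
      symm
      refine Finset.sum_eq_zero fun i _ => Finset.sum_eq_zero fun j _ => ?_
      by_cases h1 : u = f i <;> by_cases h2 : v = f j <;> simp_all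
  simp only [key]
  calc _ = ∑ u, ∑ i, ∑ v, ∑ j, (if u = f i then (if v = f j then
        (if R (f i) (f j) then c i * c j else 0) else 0) else 0) :=
        Finset.sum_congr rfl fun u _ => Finset.sum_comm
    _ = ∑ i, ∑ u, ∑ v, ∑ j, (if u = f i then (if v = f j then
        (if R (f i) (f j) then c i * c j else 0) else 0) else 0) := Finset.sum_comm
    _ = _ := by
        refine Finset.sum_congr rfl fun i _ => ?_
        rw [Finset.sum_eq_single (f i)]
        · simp only [if_true]
          rw [Finset.sum_comm]
          refine Finset.sum_congr rfl fun j _ => ?_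
          simp
        · intro b _ hb; simp [hb]
        · simp

lemma bil_lin (R : V → V → Prop) (x y z : V → ℝ) (s t : ℝ) :
    bil R x (fun v => s * y v + t * z v) = s * bil R x y + t * bil R x z := by
  unfold bil
  simp only [Finset.mul_sum, ← Finset.sum_add_distrib]
  refine Finset.sum_congr rfl fun u _ => Finset.sum_congr rfl fun v _ => ?_
  split_ifs <;> ring

/-- Simultaneous symmetrization of both forms. The weight changes `c` and `d`, placed on the distinct
vertices `f i`, are independent, and both forms are nonnegative on their span. In this plane some
nonzero direction has zero first-order effect on `R` and, up to sign, a nonnegative one on `P`. -/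
lemma reduce_two {R P : V → V → Prop} (hV : Valid R P) {x : V → ℝ} (hx : ∀ v, 0 ≤ x v)
    (IH : ∀ (w : V) (x' : V → ℝ), (∀ v, 0 ≤ x' v) → x' w = 0 → Good x' R P)
    {k : ℕ} (f : Fin k → V) (hf : Function.Injective f) (c d : Fin k → ℝ)
    (hc : ∑ i, c i = 0) (hd : ∑ i, d i = 0)
    (hli : ∀ s t : ℝ, (∀ i, s * c i + t * d i = 0) → s = 0 ∧ t = 0)
    (h1 : ∀ s t : ℝ, 0 ≤ ∑ i, ∑ j, if R (f i) (f j) then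
      (s * c i + t * d i) * (s * c j + t * d j) else 0)
    (h2 : ∀ s t : ℝ, 0 ≤ ∑ i, ∑ j, if P (f i) (f j) then
      (s * c i + t * d i) * (s * c j + t * d j) else 0) : Good x R P := by
  set y : V → ℝ := fun v => ∑ i, if v = f i then c i else 0 with hy
  set z : V → ℝ := fun v => ∑ i, if v = f i then d i else 0 with hz
  have hyz : ∀ s t : ℝ, (fun v => s * y v + t * z v) =
      fun v => ∑ i, if v = f i then s * c i + t * d i else 0 := by
    intro s t
    funext v
    simp only [hy, hz, Finset.mul_sum, ← Finset.sum_add_distrib]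
    refine Finset.sum_congr rfl fun i _ => ?_
    split_ifs <;> ring
  have main : ∀ s t : ℝ, (s ≠ 0 ∨ t ≠ 0) → 0 ≤ s * bil R x y + t * bil R x z →
      0 ≤ s * bil P x y + t * bil P x z → Good x R P := by
    intro s t hst hr hp
    refine reduce_one hV hx IH (fun v => s * y v + t * z v) ?_ ?_ ?_ ?_ ?_ ?_
    · by_contra! hcon
      have : s = 0 ∧ t = 0 := hli s t fun i => by
        have h := hcon (f i)
        rw [congrFun (hyz s t) (f i)] at h
        simpa [hf.eq_iff] using h
      tauto
    · rw [hyz, Finset.sum_comm]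
      simp [Finset.sum_add_distrib, ← Finset.mul_sum, hc, hd]
    · rw [hyz, bil_comb]; exact h1 s t
    · rw [hyz, bil_comb]; exact h2 s t
    · rw [bil_lin]; exact hr
    · rw [bil_lin]; exact hp
  by_cases h0 : bil R x y = 0 ∧ bil R x z = 0
  · rcases le_total 0 (bil P x y) with h | h
    · exact main 1 0 (by simp) (by simp [h0.1]) (by simpa using h)
    · exact main (-1) 0 (by simp) (by simp [h0.1]) (by simpa using h)
  · rcases le_total 0 (bil R x z * bil P x y - bil R x y * bil P x z) with h | h
    · exact main (bil R x z) (-bil R x y) (by rw [neg_ne_zero]; tauto) (by linarith) (by linarith)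
    · exact main (-bil R x z) (bil R x y) (by rw [neg_ne_zero]; tauto) (by linarith) (by linarith)

/-- `R` can be enlarged to be maximal for `P`: every missing pair (or loop) would create a triangle
containing a `P`-edge. -/
lemma Valid.exists_max {R P : V → V → Prop} (hV : Valid R P) :
    ∃ R' : V → V → Prop, (∀ u v, R u v → R' u v) ∧ Valid R' P ∧
      ∀ p q, R' p q ∨ ∃ z, (P p z ∧ R' q z) ∨ (P q z ∧ R' p z) := by
  obtain ⟨R', hle, hmax⟩ := (Set.toFinite {R : V → V → Prop | Valid R P}).exists_le_maximal hV
  refine ⟨R', hle, hmax.1, fun p q => ?_⟩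
  by_contra! hcon
  obtain ⟨hpq, hz⟩ := hcon
  have hm : Valid R' P := hmax.1
  have hnew : Valid (fun u v => R' u v ∨ (u = p ∧ v = q) ∨ (u = q ∧ v = p)) P := by
    have irr : ∀ u, ¬ P u u := fun u h => hm.tri u u u h (hm.sub _ _ h) (hm.sub _ _ h)
    refine ⟨?_, hm.symP, fun u v h => Or.inl (hm.sub u v h), ?_⟩
    · intro u v h
      rcases h with h | h | h
      · exact Or.inl (hm.symR _ _ h)
      · exact Or.inr (Or.inr ⟨h.2, h.1⟩)
      · exact Or.inr (Or.inl ⟨h.2, h.1⟩)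
    · have h1 := hm.symP
      have h2 := hm.symR
      have h3 := hm.tri
      intro u v w huv hu hv
      rcases hu with hu | ⟨e1, e2⟩ | ⟨e1, e2⟩ <;> rcases hv with hv | ⟨e3, e4⟩ | ⟨e3, e4⟩
      all_goals grind
  exact hpq (hmax.2 hnew (fun u v h => Or.inl h) p q (Or.inr (Or.inl ⟨rfl, rfl⟩)))

/-! ### Critical structures and reducible configurations -/

lemma good_T (X : Fin 3 → ℝ) (hX : ∀ i, 0 ≤ X i) :
    Good X (fun i j => (i = 0 ∧ j = 0) ∨ (i = 0 ∧ j = 1) ∨ (i = 1 ∧ j = 0) ∨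
        (i = 1 ∧ j = 2) ∨ (i = 2 ∧ j = 1))
      (fun i j => (i = 1 ∧ j = 2) ∨ (i = 2 ∧ j = 1)) := by
  refine ⟨X 0, X 1, X 2, hX 0, hX 1, hX 2, by rw [Fin.sum_univ_three], ?_, ?_⟩
  · simp [bil, Fin.sum_univ_three]; nlinarith
  · simp [bil, Fin.sum_univ_three]; nlinarith

/-- A structure with at most a quarter of `(∑ x)²` edges is dominated by a balanced pattern with
`a = 0`. -/
lemma Good.of_mantel {R P : V → V → Prop} (hV : Valid R P) {x : V → ℝ} (hx : ∀ v, 0 ≤ x v)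
    (h : 2 * bil R x x ≤ (∑ v, x v) ^ 2) : Good x R P := by
  have h0 : 0 ≤ ∑ v, x v := Finset.sum_nonneg fun v _ => hx v
  have := bil_mono (R := P) (R' := R) hx hV.sub
  exact ⟨0, (∑ v, x v) / 2, (∑ v, x v) / 2, le_rfl, by linarith, by linarith, by ring,
    by nlinarith, by nlinarith⟩

lemma mantel_C5 (x1 x2 x3 x4 x5 : ℝ) (h1 : 0 ≤ x1) (h2 : 0 ≤ x2) (h3 : 0 ≤ x3) (h4 : 0 ≤ x4)
    (h5 : 0 ≤ x5) :
    4 * (x1 * x2 + x2 * x3 + x3 * x4 + x4 * x5 + x5 * x1) ≤ (x1 + x2 + x3 + x4 + x5) ^ 2 := by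
  rcases le_total x1 x2 with h | h
  · nlinarith [sq_nonneg (x1 - x2 + x3 - x4 + x5), mul_nonneg h5 (sub_nonneg.2 h),
      mul_nonneg h1 h4]
  rcases le_total x2 x3 with h' | h'
  · nlinarith [sq_nonneg (x2 - x3 + x4 - x5 + x1), mul_nonneg h1 (sub_nonneg.2 h'),
      mul_nonneg h2 h5]
  · nlinarith [sq_nonneg (x4 - x3 + x2 - x1 + x5), mul_nonneg h4 (sub_nonneg.2 h'),
      mul_nonneg h3 h5, mul_nonneg h5 (sub_nonneg.2 h),
      sq_nonneg (x3 - x2 + x1 - x5 + x4)]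

/-- A counterexample in which `R` is maximal for `P` (`max`) and no weight function with a vanishing
weight gives a counterexample on the same `(R, P)` (`IH`). -/
structure Crit (x : V → ℝ) (R P : V → V → Prop) : Prop extends Valid R P where
  nonneg : ∀ v, 0 ≤ x v
  max : ∀ p q, R p q ∨ ∃ z, (P p z ∧ R q z) ∨ (P q z ∧ R p z)
  IH : ∀ (w : V) (x' : V → ℝ), (∀ v, 0 ≤ x' v) → x' w = 0 → Good x' R P
  bad : ¬ Good x R P

variable {x : V → ℝ} {R P : V → V → Prop}

lemma Crit.homT (h : Crit x R P) (φ : V → Fin 3)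
    (h1 : ∀ u v, R u v → (φ u = 0 ∧ φ v = 0) ∨ (φ u = 0 ∧ φ v = 1) ∨ (φ u = 1 ∧ φ v = 0) ∨
        (φ u = 1 ∧ φ v = 2) ∨ (φ u = 2 ∧ φ v = 1))
    (h2 : ∀ u v, P u v → (φ u = 1 ∧ φ v = 2) ∨ (φ u = 2 ∧ φ v = 1)) : False :=
  h.bad (Good.of_hom φ _ _ h.nonneg h1 h2 good_T)

/-- A critical structure has no three pairwise nonadjacent vertices. -/
lemma Crit.indep (h : Crit x R P) {u v w : V} (huv : u ≠ v) (huw : u ≠ w) (hvw : v ≠ w)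
    (r1 : ¬ R u v) (r2 : ¬ R u w) : R v w := by
  by_contra r3
  have r1' := mt (h.symR _ _) r1
  have r2' := mt (h.symR _ _) r2
  have r3' := mt (h.symR _ _) r3
  have pp : ∀ a b, ¬ R a b → ¬ P a b := fun a b => mt (h.sub a b)
  have loopP : ∀ a, ¬ P a a := fun a h' => h.tri a a a h' (h.sub _ _ h') (h.sub _ _ h')
  refine h.bad (reduce_two h.toValid h.nonneg h.IH ![u, v, w] ?_ ![1, -1, 0] ![0, 1, -1]
    ?_ ?_ ?_ ?_ ?_)
  · intro i j; fin_cases i <;> fin_cases j <;> simp_all [eq_comm]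
  · simp [Fin.sum_univ_succ]
  · simp [Fin.sum_univ_succ]
  · intro s t hst
    have e0 := hst 0
    have e2 := hst 2
    simp at e0 e2
    exact ⟨e0, e2⟩
  · intro s t
    simp [Fin.sum_univ_three, r1, r2, r3, r1', r2', r3']
    refine add_nonneg (add_nonneg ?_ ?_) ?_ <;> split_ifs <;> nlinarith
  · intro s t
    simp [Fin.sum_univ_three, r1, r2, r3, r1', r2', r3', pp, loopP]

/-- Reducible configuration: a `P`-path `a u v b` with `a` and `b` adjacent, and a looped vertex `c`
adjacent to both `a` and `b`. -/
lemma Crit.path (h : Crit x R P) {a u v b c : V} (hau : P a u) (huv : P u v) (hvb : P v b)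
    (hab : R a b) (hac : R a c) (hbc : R b c) (hcc : R c c) : False := by
  have loopP : ∀ a, ¬ P a a := fun a h' => h.tri a a a h' (h.sub _ _ h') (h.sub _ _ h')
  have symR := h.symR
  have symP := h.symP
  have sub := h.sub
  have tri := h.tri
  have n1 : ¬ R a v ∧ ¬ R v a := by grind
  have n2 : ¬ R u b ∧ ¬ R b u := by grind
  have n3 : ¬ R u c ∧ ¬ R c u := by grind
  have n4 : ¬ R v c ∧ ¬ R c v := by grind
  have n5 : ¬ R a a ∧ ¬ R u u ∧ ¬ R v v ∧ ¬ R b b := by grind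
  have q1 : ¬ P a b ∧ ¬ P b a := by grind
  have q2 : ∀ z, ¬ P c z := by grind
  have q3 : ∀ z, ¬ P z c := by grind
  have pp : ∀ a b, ¬ R a b → ¬ P a b := fun a b => mt (h.sub a b)
  have y1 := sub _ _ hau
  have y2 := sub _ _ huv
  have y3 := sub _ _ hvb
  have y1' := symR _ _ y1
  have y2' := symR _ _ y2
  have y3' := symR _ _ y3
  have p1' := symP _ _ hau
  have p2' := symP _ _ huv
  have p3' := symP _ _ hvb
  have hab' := symR _ _ hab
  have hac' := symR _ _ hac
  have hbc' := symR _ _ hbc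
  refine h.bad (reduce_two h.toValid h.nonneg h.IH ![a, u, v, b, c] ?_ ![1, 1, -1, -1, 0]
    ![0, 1, 1, 0, -2] ?_ ?_ ?_ ?_ ?_)
  · have d1 : a ≠ u := by grind
    have d2 : a ≠ v := by grind
    have d3 : a ≠ b := by grind
    have d4 : a ≠ c := by grind
    have d5 : u ≠ v := by grind
    have d6 : u ≠ b := by grind
    have d7 : u ≠ c := by grind
    have d8 : v ≠ b := by grind
    have d9 : v ≠ c := by grind
    have d10 : b ≠ c := by grind
    clear * - d1 d2 d3 d4 d5 d6 d7 d8 d9 d10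
    intro i j; fin_cases i <;> fin_cases j <;> simp_all [eq_comm]
  · simp [Fin.sum_univ_five]
  · simp [Fin.sum_univ_five]; norm_num
  · intro s t hst
    have e0 := hst 0
    have e2 := hst 4
    simp at e0 e2
    exact ⟨e0, e2⟩
  · intro s t
    simp [Fin.sum_univ_five, *]
    nlinarith [sq_nonneg s, sq_nonneg t]
  · intro s t
    simp [Fin.sum_univ_five, *]
    nlinarith [sq_nonneg s, sq_nonneg t]

/-- Reducible configuration: two disjoint `P`-edges `uv` and `pq` joined to a 4-cycle, with a looped
vertex `w` adjacent to `u` and `p`. The edge `vq` may or may not belong to `P`. -/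
lemma Crit.match2 (h : Crit x R P) {u v p q w : V} (huv : P u v) (hpq : P p q)
    (hup : R u p) (hvq : R v q) (hwu : R w u) (hwp : R w p) (hww : R w w) : False := by
  have loopP : ∀ a, ¬ P a a := fun a h' => h.tri a a a h' (h.sub _ _ h') (h.sub _ _ h')
  have symR := h.symR
  have symP := h.symP
  have sub := h.sub
  have tri := h.tri
  have n1 : ¬ R u q ∧ ¬ R q u := by grind
  have n2 : ¬ R v p ∧ ¬ R p v := by grind
  have n3 : ¬ R v w ∧ ¬ R w v := by grind
  have n4 : ¬ R q w ∧ ¬ R w q := by grind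
  have n5 : ¬ R u u ∧ ¬ R v v ∧ ¬ R p p ∧ ¬ R q q := by grind
  have q1 : ¬ P u p ∧ ¬ P p u := by grind
  have q2 : ∀ z, ¬ P w z := by grind
  have q3 : ∀ z, ¬ P z w := by grind
  have pp : ∀ a b, ¬ R a b → ¬ P a b := fun a b => mt (h.sub a b)
  have q4 : P q v ↔ P v q := ⟨symP _ _, symP _ _⟩
  have y1 := sub _ _ huv
  have y2 := sub _ _ hpq
  have y1' := symR _ _ y1
  have y2' := symR _ _ y2
  have p1' := symP _ _ huv
  have p2' := symP _ _ hpq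
  have z1 := symR _ _ hup
  have z2 := symR _ _ hvq
  have z3 := symR _ _ hwu
  have z4 := symR _ _ hwp
  refine h.bad (reduce_two h.toValid h.nonneg h.IH ![u, v, p, q, w] ?_ ![1, 1, 0, 0, -2]
    ![0, 0, 1, 1, -2] ?_ ?_ ?_ ?_ ?_)
  · have d1 : u ≠ v := by grind
    have d2 : u ≠ p := by grind
    have d3 : u ≠ q := by grind
    have d4 : u ≠ w := by grind
    have d5 : v ≠ p := by grind
    have d6 : v ≠ q := by grind
    have d7 : v ≠ w := by grind
    have d8 : p ≠ q := by grind
    have d9 : p ≠ w := by grind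
    have d10 : q ≠ w := by grind
    clear * - d1 d2 d3 d4 d5 d6 d7 d8 d9 d10
    intro i j; fin_cases i <;> fin_cases j <;> simp_all [eq_comm]
  · simp [Fin.sum_univ_five]; norm_num
  · simp [Fin.sum_univ_five]; norm_num
  · intro s t hst
    have e0 := hst 0
    have e2 := hst 2
    simp at e0 e2
    exact ⟨e0, e2⟩
  · intro s t
    simp [Fin.sum_univ_five, *]
    nlinarith [sq_nonneg (s + t)]
  · intro s t
    by_cases q5 : P v q
    · simp [Fin.sum_univ_five, *]
      nlinarith [sq_nonneg (s + t), sq_nonneg s, sq_nonneg t]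
    · simp [Fin.sum_univ_five, *]
      nlinarith [sq_nonneg s, sq_nonneg t]

/-- Reducible configuration: three disjoint `P`-edges `uv`, `pq`, `wz` matching the triangles `u p w`
and `v q z`. -/
lemma Crit.match3 (h : Crit x R P) {u v p q w z : V} (huv : P u v) (hpq : P p q) (hwz : P w z)
    (hup : R u p) (hvq : R v q) (hwu : R w u) (hwp : R w p) (hzv : R z v) (hzq : R z q) :
    False := by
  have loopP : ∀ a, ¬ P a a := fun a h' => h.tri a a a h' (h.sub _ _ h') (h.sub _ _ h')
  have symR := h.symR
  have symP := h.symP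
  have sub := h.sub
  have tri := h.tri
  have n1 : ¬ R u q ∧ ¬ R q u := by grind
  have n2 : ¬ R v p ∧ ¬ R p v := by grind
  have n3 : ¬ R v w ∧ ¬ R w v := by grind
  have n4 : ¬ R q w ∧ ¬ R w q := by grind
  have n6 : ¬ R u z ∧ ¬ R z u := by grind
  have n7 : ¬ R p z ∧ ¬ R z p := by grind
  have n5 : ¬ R u u ∧ ¬ R v v ∧ ¬ R p p ∧ ¬ R q q ∧ ¬ R w w ∧ ¬ R z z := by grind
  have q1 : ¬ P u p ∧ ¬ P p u := by grind
  have q2 : ¬ P u w ∧ ¬ P w u := by grind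
  have q3 : ¬ P w p ∧ ¬ P p w := by grind
  have q4 : ¬ P v q ∧ ¬ P q v := by grind
  have q5 : ¬ P v z ∧ ¬ P z v := by grind
  have q6 : ¬ P z q ∧ ¬ P q z := by grind
  have pp : ∀ a b, ¬ R a b → ¬ P a b := fun a b => mt (h.sub a b)
  have y1 := sub _ _ huv
  have y2 := sub _ _ hpq
  have y3 := sub _ _ hwz
  have y1' := symR _ _ y1
  have y2' := symR _ _ y2
  have y3' := symR _ _ y3
  have p1' := symP _ _ huv
  have p2' := symP _ _ hpq
  have p3' := symP _ _ hwz
  have z1 := symR _ _ hup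
  have z2 := symR _ _ hvq
  have z3 := symR _ _ hwu
  have z4 := symR _ _ hwp
  have z5 := symR _ _ hzv
  have z6 := symR _ _ hzq
  refine h.bad (reduce_two h.toValid h.nonneg h.IH ![u, v, p, q, w, z] ?_ ![1, 1, -1, -1, 0, 0]
    ![0, 0, 1, 1, -1, -1] ?_ ?_ ?_ ?_ ?_)
  · have d1 : u ≠ v := by grind
    have d2 : u ≠ p := by grind
    have d3 : u ≠ q := by grind
    have d4 : u ≠ w := by grind
    have d5 : v ≠ p := by grind
    have d6 : v ≠ q := by grind
    have d7 : v ≠ w := by grind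
    have d8 : p ≠ q := by grind
    have d9 : p ≠ w := by grind
    have d10 : q ≠ w := by grind
    have d11 : u ≠ z := by grind
    have d12 : v ≠ z := by grind
    have d13 : p ≠ z := by grind
    have d14 : q ≠ z := by grind
    have d15 : w ≠ z := by grind
    clear * - d1 d2 d3 d4 d5 d6 d7 d8 d9 d10 d11 d12 d13 d14 d15
    intro i j; fin_cases i <;> fin_cases j <;> simp_all [eq_comm]
  · simp [Fin.sum_univ_six]
  · simp [Fin.sum_univ_six]
  · intro s t hst
    have e0 := hst 0
    have e2 := hst 4
    simp at e0 e2
    exact ⟨e0, e2⟩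
  · intro s t
    simp [Fin.sum_univ_six, *]
    nlinarith [sq_nonneg (s + t)]
  · intro s t
    simp [Fin.sum_univ_six, *]
    nlinarith [sq_nonneg (s - t), sq_nonneg s, sq_nonneg t]

/-- A critical structure has no homomorphism to the 5-cycle, by the weighted Mantel bound. -/
lemma Crit.homC5 (h : Crit x R P) (φ : V → Fin 5)
    (h1 : ∀ u v, R u v → φ v = φ u + 1 ∨ φ u = φ v + 1) : False := by
  refine h.bad (Good.of_mantel h.toValid h.nonneg ?_)
  have key := bil_le_push φ (fun i j => j = i + 1 ∨ i = j + 1) h.nonneg h1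
  have hX := push_nonneg φ h.nonneg
  rw [← sum_push φ x]
  generalize push φ x = X at key hX ⊢
  have m := mantel_C5 (X 0) (X 1) (X 2) (X 3) (X 4) (hX 0) (hX 1) (hX 2) (hX 3) (hX 4)
  have e : bil (fun i j => j = i + 1 ∨ i = j + 1) X X =
      2 * (X 0 * X 1 + X 1 * X 2 + X 2 * X 3 + X 3 * X 4 + X 4 * X 0) := by
    simp [bil, Fin.sum_univ_five]
    ring
  rw [e] at key
  rw [Fin.sum_univ_five]
  linarith

/-- Classes `0, 1` are independent and joined by `P`-edges, classes `2, 3` form a looped clique, and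
class `2` is joined to `0`, class `3` to `1`. Joining both `2` and `3` to the heavier of `0` and `1`
gives the dominating pattern. -/
lemma good_four (X : Fin 4 → ℝ) (hX : ∀ i, 0 ≤ X i) :
    Good X (fun i j => (i = 0 ∧ j = 1) ∨ (i = 1 ∧ j = 0) ∨ (i = 0 ∧ j = 2) ∨ (i = 2 ∧ j = 0) ∨
        (i = 1 ∧ j = 3) ∨ (i = 3 ∧ j = 1) ∨ (2 ≤ i ∧ 2 ≤ j))
      (fun i j => (i = 0 ∧ j = 1) ∨ (i = 1 ∧ j = 0)) := by
  have h0 := hX 0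
  have h1 := hX 1
  have h2 := hX 2
  have h3 := hX 3
  rcases le_total (X 0) (X 1) with h | h
  · refine ⟨X 2 + X 3, X 1, X 0, by linarith, h1, h0, by rw [Fin.sum_univ_four]; ring, ?_, ?_⟩
    · simp [bil, Fin.sum_univ_four]; nlinarith
    · simp [bil, Fin.sum_univ_four]; nlinarith
  · refine ⟨X 2 + X 3, X 0, X 1, by linarith, h0, h1, by rw [Fin.sum_univ_four]; ring, ?_, ?_⟩
    · simp [bil, Fin.sum_univ_four]; nlinarith
    · simp [bil, Fin.sum_univ_four]; nlinarith

lemma Crit.hom4 (h : Crit x R P) (φ : V → Fin 4)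
    (h1 : ∀ u v, R u v → (φ u = 0 ∧ φ v = 1) ∨ (φ u = 1 ∧ φ v = 0) ∨ (φ u = 0 ∧ φ v = 2) ∨
      (φ u = 2 ∧ φ v = 0) ∨ (φ u = 1 ∧ φ v = 3) ∨ (φ u = 3 ∧ φ v = 1) ∨ (2 ≤ φ u ∧ 2 ≤ φ v))
    (h2 : ∀ u v, P u v → (φ u = 0 ∧ φ v = 1) ∨ (φ u = 1 ∧ φ v = 0)) : False :=
  h.bad (Good.of_hom φ _ _ h.nonneg h1 h2 good_four)

lemma Crit.loopR (h : Crit x R P) {a b : V} (hab : P a b) : ¬ R a a :=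
  fun h' => h.tri a b a hab h' (h.symR _ _ (h.sub _ _ hab))

/-! ### The structure around a `P`-edge -/

/-- The configuration `u a c b v`, with `c` nonadjacent to both ends of the `P`-edge `uv`, `P c a`, and
`b` on a further `P`-edge, exhausts all vertices and is a 5-cycle. -/
lemma Crit.five (h : Crit x R P) {u v a b c : V} (huv : P u v) (hcu : c ≠ u) (hcv : c ≠ v)
    (nuc : ¬ R u c) (nvc : ¬ R v c) (hua : R u a) (hav : a ≠ v) (hca : P c a)
    (hvb : R v b) (hbu : b ≠ u) (hcb : R c b) (hb : P v b ∨ P c b) : False := by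
  have symR := h.symR
  have symP := h.symP
  have sub := h.sub
  have tri := h.tri
  have loopR := @Crit.loopR _ _ _ _ _ h
  have indep := @Crit.indep _ _ _ _ _ h
  have nva : ¬ R v a := by grind
  have nub : ¬ R u b := by grind
  have nab : ¬ R a b := by grind
  have hac : a ≠ c := by grind
  have hbc : b ≠ c := by grind
  have hab : a ≠ b := by grind
  have huv' : u ≠ v := by grind
  have hau : a ≠ u := by grind
  have hbv : b ≠ v := by grind
  have hA : ∀ w, R u w → w ≠ v → w = a := by
    intro w h1 h2
    by_contra h3
    have : ¬ R v w := by grind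
    have r1 : R w a := indep (u := v) (by grind) (by grind) h3 (by grind) (by grind)
    have r2 : R w c := indep (u := v) (by grind) (by grind) (by grind) (by grind) (by grind)
    grind
  have hB : ∀ w, R v w → w ≠ u → w = b := by
    intro w h1 h2
    by_contra h3
    have : ¬ R u w := by grind
    have r1 : R w b := indep (u := u) (by grind) (by grind) h3 (by grind) (by grind)
    have r2 : R w c := indep (u := u) (by grind) (by grind) (by grind) (by grind) (by grind)
    grind
  have hC : ∀ w, ¬ R u w → ¬ R v w → w = c := by
    intro w h1 h2
    by_contra h3
    have r1 : R w c := indep (u := v) (by grind) (by grind) h3 (by grind) (by grind)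
    have r2 : R w a := indep (u := v) (by grind) (by grind) (by grind) (by grind) (by grind)
    grind
  have hall : ∀ w, w = u ∨ w = v ∨ w = a ∨ w = b ∨ w = c := by
    intro w
    by_cases h1 : R u w <;> by_cases h2 : R v w <;> grind
  have l1 := loopR huv
  have l2 := loopR (symP _ _ huv)
  have l3 := loopR hca
  have l4 := loopR (symP _ _ hca)
  have l5 : ¬ R b b := by
    rcases hb with h | h
    · exact loopR (symP _ _ h)
    · exact loopR (symP _ _ h)
  refine h.homC5 (fun w => if w = u then 0 else if w = a then 1 else if w = c then 2 else
    if w = b then 3 else 4) ?_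
  intro w w' hw
  rcases hall w with rfl | rfl | rfl | rfl | rfl <;>
  rcases hall w' with rfl | rfl | rfl | rfl | rfl <;>
  first
  | (exfalso; grind)
  | (simp [*, huv'.symm, hbv.symm, hac.symm, hab.symm, hcv.symm, hav.symm])

/-- Every vertex off a `P`-edge is adjacent to one of its ends. -/
lemma Crit.noC (h : Crit x R P) {u v c : V} (huv : P u v) (hcu : c ≠ u) (hcv : c ≠ v) :
    R u c ∨ R v c := by
  by_contra! hcon
  obtain ⟨nuc, nvc⟩ := hcon
  have symR := h.symR
  have symP := h.symP
  have sub := h.sub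
  have tri := h.tri
  have loopR := @Crit.loopR _ _ _ _ _ h
  have indep := @Crit.indep _ _ _ _ _ h
  have l1 := loopR huv
  have l2 := loopR (symP _ _ huv)
  -- Maximality of `R` at the nonadjacent pairs `u, c` and `v, c` provides `a` and `b`.
  obtain ⟨a, ha⟩ := (h.max u c).resolve_left nuc
  obtain ⟨b, hb⟩ := (h.max v c).resolve_left nvc
  have hua : R u a := by grind
  have hvb : R v b := by grind
  have hca : R c a := by grind
  have hcb : R c b := by grind
  have hav : a ≠ v := by grind
  have hbu : b ≠ u := by grind
  by_cases h1 : P c a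
  · exact h.five huv hcu hcv nuc nvc hua hav h1 hvb hbu hcb (by tauto)
  by_cases h2 : P c b
  · exact h.five (symP _ _ huv) hcv hcu nvc nuc hvb hbu h2 hua hav hca (by tauto)
  have pua : P u a := by tauto
  have pvb : P v b := by tauto
  have hC : ∀ c', c' ≠ u → c' ≠ v → ¬ R u c' → ¬ R v c' → R c' a ∧ R c' b := by
    intro c' e1 e2 e3 e4
    exact ⟨indep (u := v) e2.symm hav.symm (by grind) e4 (by grind),
      indep (u := u) e1.symm hbu.symm (by grind) e3 (by grind)⟩
  have hCP : ∀ c', c' ≠ u → c' ≠ v → ¬ R u c' → ¬ R v c' → ¬ P c' a ∧ ¬ P c' b := by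
    intro c' e1 e2 e3 e4
    obtain ⟨r1, r2⟩ := hC c' e1 e2 e3 e4
    exact ⟨fun p => h.five huv e1 e2 e3 e4 hua hav p hvb hbu r2 (by tauto),
      fun p => h.five (symP _ _ huv) e2 e1 e4 e3 hvb hbu p hua hav r1 (by tauto)⟩
  have hA : ∀ w, R u w → w ≠ v → w = a := by
    intro w h1 h2
    by_contra h3
    have : ¬ R v w := by grind
    have r1 : R w a := indep (u := v) (by grind) (by grind) h3 (by grind) (by grind)
    grind
  have hB : ∀ w, R v w → w ≠ u → w = b := by
    intro w h1 h2
    by_contra h3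
    have : ¬ R u w := by grind
    have r1 : R w b := indep (u := u) (by grind) (by grind) h3 (by grind) (by grind)
    grind
  have nva : ¬ R v a := tri u v a huv hua
  have nub : ¬ R u b := fun h' => tri u v b huv h' hvb
  have hout : ∀ z, z ≠ u → z ≠ v → z ≠ a → z ≠ b → R z a ∧ R z b ∧ ¬ P z a ∧ ¬ P z b := by
    intro z e1 e2 e3 e4
    have f1 : ¬ R u z := fun h' => e3 (hA z h' e2)
    have f2 : ¬ R v z := fun h' => e4 (hB z h' e1)
    exact ⟨(hC z e1 e2 f1 f2).1, (hC z e1 e2 f1 f2).2, hCP z e1 e2 f1 f2⟩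
  have la := loopR (symP _ _ pua)
  have lb := loopR (symP _ _ pvb)
  clear hC hCP hA hB indep loopR
  have hab : R a b := by
    rcases h.max a b with h' | ⟨z, ⟨p, r⟩ | ⟨p, r⟩⟩
    · exact h'
    · have := hout z (by grind) (by grind) (by grind)
      grind
    · have := hout z (by grind) (by grind) (by grind)
      grind
  have hcc : R c c := by
    rcases h.max c c with h' | ⟨z, hz⟩
    · exact h'
    · have p : P c z := by tauto
      have := hout z (by grind) (by grind) (by grind) (by grind)
      grind
  exact h.path (symP _ _ pua) huv pvb hab (symR _ _ hca) (symR _ _ hcb) hcc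

/-- If the clique of `u` and the clique of `v` are joined by a second `P`-edge `pq`, then the clique of
`u` has no third vertex `w`. -/
lemma Crit.noThird (h : Crit x R P) {u v p q w : V} (huv : P u v) (hpq : P p q)
    (hup : R u p) (hpv : p ≠ v) (hvq : R v q) (hqu : q ≠ u) (huw : R u w) (hwv : w ≠ v)
    (hwp : w ≠ p) : False := by
  have symR := h.symR
  have symP := h.symP
  have sub := h.sub
  have tri := h.tri
  have indep := @Crit.indep _ _ _ _ _ h
  have noC := @Crit.noC _ _ _ _ _ h
  have loopR := @Crit.loopR _ _ _ _ _ h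
  have l1 := loopR huv
  have l2 := loopR (symP _ _ huv)
  have l3 := loopR hpq
  have l4 := loopR (symP _ _ hpq)
  have r1 : R w p := indep (u := v) (by grind) (by grind) (by grind) (by grind) (by grind)
  by_cases hww : R w w
  · exact h.match2 huv hpq hup hvq (symR _ _ huw) r1 hww
  obtain ⟨z, hz⟩ := (h.max w w).resolve_left hww
  have hz : P w z := by tauto
  have e1 : z ≠ u := by grind
  have e2 : z ≠ v := by grind
  have e3 : z ≠ p := by grind
  have e4 : z ≠ q := by grind
  have e5 : R v z := by
    rcases noC huv e1 e2 with h | h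
    · exact (tri _ _ u hz (symR _ _ huw) (symR _ _ h)).elim
    · exact h
  have r2 : R z q := indep (u := u) (by grind) (by grind) (by grind) (by grind) (by grind)
  exact h.match3 huv hpq hz hup hvq (symR _ _ huw) r1 (symR _ _ e5) r2

/-- `uv` is the only `P`-edge between the clique of `u` and the clique of `v`. -/
lemma Crit.noCross (h : Crit x R P) {u v p q : V} (huv : P u v) (hpq : P p q)
    (hup : R u p) (hpv : p ≠ v) (hvq : R v q) (hqu : q ≠ u) : False := by
  have symR := h.symR
  have symP := h.symP
  have sub := h.sub
  have tri := h.tri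
  have noC := @Crit.noC _ _ _ _ _ h
  have loopR := @Crit.loopR _ _ _ _ _ h
  have l1 := loopR huv
  have l2 := loopR (symP _ _ huv)
  have l3 := loopR hpq
  have l4 := loopR (symP _ _ hpq)
  have n1 : ¬ R v p := by grind
  have n2 : ¬ R u q := by grind
  have hall : ∀ w, w = u ∨ w = v ∨ w = p ∨ w = q := by
    by_contra! hcon
    obtain ⟨w, w1, w2, w3, w4⟩ := hcon
    rcases noC huv w1 w2 with h' | h'
    · exact h.noThird huv hpq hup hpv hvq hqu h' w2 w3
    · exact h.noThird (symP _ _ huv) (symP _ _ hpq) hvq hqu hup hpv h' w1 w4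
  have hR : ∀ w w', R w w' → ((w = u ∨ w = q) ∧ (w' ≠ u ∧ w' ≠ q)) ∨
      ((w ≠ u ∧ w ≠ q) ∧ (w' = u ∨ w' = q)) := by
    intro w w' hw
    rcases hall w with rfl | rfl | rfl | rfl <;>
    rcases hall w' with rfl | rfl | rfl | rfl <;> grind
  refine h.homT (fun w => if w = u ∨ w = q then 1 else 2) ?_ ?_
  · intro w w' hw
    have := hR _ _ hw
    grind
  · intro w w' hw
    have := hR _ _ (sub _ _ hw)
    grind

/-- If `u` has a second `P`-neighbour `a` but `v` has none besides `u`, the structure maps to the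
extremal pattern: `u` goes to class `c`, `a` and `v` to class `b`, everything else to class `a`. -/
lemma Crit.oneSide (h : Crit x R P) {u v a : V} (huv : P u v) (hua : P u a) (hav : a ≠ v)
    (hv : ∀ b, P v b → b = u) : False := by
  have symR := h.symR
  have symP := h.symP
  have sub := h.sub
  have tri := h.tri
  have noC := @Crit.noC _ _ _ _ _ h
  have indep := @Crit.indep _ _ _ _ _ h
  have noCross := @Crit.noCross _ _ _ _ _ h
  have loopR := @Crit.loopR _ _ _ _ _ h
  have l1 := loopR huv
  have l2 := loopR (symP _ _ huv)
  have l3 := loopR (symP _ _ hua)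
  have n1 : ¬ R v a := by grind
  have hA : ∀ w, R u w → w ≠ v → w = a := by
    intro w h1 h2
    by_contra h3
    have : ¬ R v w := by grind
    have r1 : R w a := indep (u := v) (by grind) (by grind) h3 (by grind) (by grind)
    grind
  have hall : ∀ w, w = u ∨ w = v ∨ w = a ∨ (w ≠ u ∧ w ≠ v ∧ w ≠ a ∧ R v w ∧ ¬ R u w) := by
    intro w
    by_cases w1 : w = u
    · tauto
    by_cases w2 : w = v
    · tauto
    rcases noC huv w1 w2 with h' | h'
    · grind
    · grind
  refine h.homT (fun w => if w = u then 2 else if w = a ∨ w = v then 1 else 0) ?_ ?_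
  · intro w w' hw
    rcases hall w with h1 | h1 | h1 | h1 <;>
    rcases hall w' with h2 | h2 | h2 | h2 <;> grind
  · intro w w' hw
    have hw' := sub _ _ hw
    have nc := @noCross u v a w' huv
    have nc' := @noCross u v a w huv
    have := symP _ _ hw
    rcases hall w with h1 | h1 | h1 | h1 <;>
    rcases hall w' with h2 | h2 | h2 | h2 <;> grind

/-- The `P`-edges form a matching. If both `u` and `v` had further `P`-neighbours, these four
vertices would be all, and the structure would be bipartite. -/
lemma Crit.noSide (h : Crit x R P) {u v a : V} (huv : P u v) (hua : P u a) : a = v := by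
  by_contra hav
  have symR := h.symR
  have symP := h.symP
  have sub := h.sub
  have tri := h.tri
  have noC := @Crit.noC _ _ _ _ _ h
  have indep := @Crit.indep _ _ _ _ _ h
  have loopR := @Crit.loopR _ _ _ _ _ h
  have l1 := loopR huv
  have l2 := loopR (symP _ _ huv)
  have l3 := loopR (symP _ _ hua)
  have n1 : ¬ R v a := by grind
  by_cases hv : ∀ b, P v b → b = u
  · exact h.oneSide huv hua hav hv
  push Not at hv
  obtain ⟨b, hvb, hbu⟩ := hv
  have l4 := loopR (symP _ _ hvb)
  have hA : ∀ w, R u w → w ≠ v → w = a := by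
    intro w h1 h2
    by_contra h3
    have : ¬ R v w := by grind
    have r1 : R w a := indep (u := v) (by grind) (by grind) h3 (by grind) (by grind)
    grind
  have hB : ∀ w, R v w → w ≠ u → w = b := by
    intro w h1 h2
    by_contra h3
    have : ¬ R u w := by grind
    have r1 : R w b := indep (u := u) (by grind) (by grind) h3 (by grind) (by grind)
    grind
  have hall : ∀ w, w = u ∨ w = v ∨ w = a ∨ w = b := by
    intro w
    by_cases w1 : w = u
    · tauto
    by_cases w2 : w = v
    · tauto
    rcases noC huv w1 w2 with h' | h' <;> grind
  have hR : ∀ w w', R w w' → ((w = u ∨ w = b) ∧ (w' ≠ u ∧ w' ≠ b)) ∨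
      ((w ≠ u ∧ w ≠ b) ∧ (w' = u ∨ w' = b)) := by
    intro w w' hw
    rcases hall w with rfl | rfl | rfl | rfl <;>
    rcases hall w' with rfl | rfl | rfl | rfl <;> grind
  refine h.homT (fun w => if w = u ∨ w = b then 1 else 2) ?_ ?_
  · intro w w' hw
    have := hR _ _ hw
    grind
  · intro w w' hw
    have := hR _ _ (sub _ _ hw)
    grind

/-- There is no critical structure. -/
lemma Crit.false (h : Crit x R P) : False := by
  have symR := h.symR
  have symP := h.symP
  have sub := h.sub
  have tri := h.tri
  by_cases hP : ∃ u v, P u v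
  · obtain ⟨u, v, huv⟩ := hP
    have l1 := h.loopR huv
    have l2 := h.loopR (symP _ _ huv)
    have hall : ∀ w, w = u ∨ w = v ∨ (w ≠ u ∧ w ≠ v ∧ R u w ∧ ¬ R v w) ∨
        (w ≠ u ∧ w ≠ v ∧ R v w ∧ ¬ R u w) := by
      intro w
      have := @Crit.noC _ _ _ _ _ h u v w huv
      grind
    have e1 : ∀ a, P u a → a = v := fun a => h.noSide huv
    have e2 : ∀ a, P v a → a = u := fun a => h.noSide (symP _ _ huv)
    have nc : ∀ p q, P p q → R u p → p ≠ v → R v q → q ≠ u → False :=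
      fun p q a b c d e => h.noCross huv a b c d e
    refine h.hom4 (fun w => if w = u then 0 else if w = v then 1 else if R u w then 2 else 3) ?_ ?_
    · intro w w' hw
      rcases hall w with h1 | h1 | h1 | h1 <;>
      rcases hall w' with h2 | h2 | h2 | h2 <;> grind
    · intro w w' hw
      have := sub _ _ hw
      have := symP _ _ hw
      rcases hall w with h1 | h1 | h1 | h1 <;>
      rcases hall w' with h2 | h2 | h2 | h2 <;> grind
  · push Not at hP
    exact h.homT (fun _ => 0) (fun _ _ _ => by simp) (fun u v p => (hP u v p).elim)

end

/-- Every valid weighted structure is dominated by an extremal pattern, by induction on the number of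
vertices. -/
theorem core (m : ℕ) : ∀ (V : Type) [Fintype V] (x : V → ℝ) (R P : V → V → Prop),
    Fintype.card V = m → (∀ v, 0 ≤ x v) → Valid R P → Good x R P := by
  induction m using Nat.strong_induction_on with
  | _ m ih =>
  intro V _ x R₀ P hm hx hV₀
  obtain ⟨R, hle, hV, hmax⟩ := hV₀.exists_max
  refine Good.mono hx hle ?_
  by_contra hbad
  refine Crit.false (x := x) (R := R) (P := P) ⟨hV, hx, hmax, ?_, hbad⟩
  intro w x' hx' hw
  have hsum : ∀ f : V → ℝ, f w = 0 → ∑ v : {v // v ≠ w}, f v = ∑ v, f v := by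
    intro f hf
    rw [Fintype.sum_eq_add_sum_subtype_ne f w, hf, zero_add]
  have hbil : ∀ Q : V → V → Prop, bil (fun u v : {v // v ≠ w} => Q u v) (fun v => x' v)
      (fun v => x' v) = bil Q x' x' := by
    intro Q
    unfold bil
    rw [← hsum (fun u => ∑ v, if Q u v then x' u * x' v else 0) (by simp [hw])]
    refine Finset.sum_congr rfl fun u _ => ?_
    exact hsum (fun v => if Q u v then x' u * x' v else 0) (by simp [hw])
  obtain ⟨a, b, c, ha, hb, hc, hs, h1, h2⟩ := ih (Fintype.card {v // v ≠ w})
    (by rw [← hm]; exact Fintype.card_subtype_lt (x := w) (by simp)) {v // v ≠ w}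
    (fun v => x' v) (fun u v => R u v) (fun u v => P u v) rfl (fun v => hx' v)
    ⟨fun _ _ => hV.symR _ _, fun _ _ => hV.symP _ _, fun _ _ => hV.sub _ _,
      fun _ _ _ => hV.tri _ _ _⟩
  rw [hbil] at h1 h2
  exact ⟨a, b, c, ha, hb, hc, by rw [hs, hsum x' hw], h1, h2⟩

/-! ### Back to graphs -/

lemma bil_adj {n : ℕ} (G : SimpleGraph (Fin n)) :
    bil G.Adj (fun _ => 1) (fun _ => 1) = 2 * (G.edgeSet.ncard : ℝ) := by
  have h := G.sum_degrees_eq_twice_card_edges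
  have h2 : G.edgeSet.ncard = G.edgeFinset.card := by
    rw [← SimpleGraph.coe_edgeFinset, Set.ncard_coe_finset]
  rw [h2]
  have h3 : bil G.Adj (fun _ => 1) (fun _ => 1) = ∑ v, (G.degree v : ℝ) := by
    unfold bil
    refine Finset.sum_congr rfl fun u _ => ?_
    rw [← SimpleGraph.card_neighborFinset_eq_degree, SimpleGraph.neighborFinset_eq_filter]
    simp
  rw [h3]
  exact_mod_cast h

/-- The graph of the edges of `G` lying in no triangle. -/
def nonTri {n : ℕ} (G : SimpleGraph (Fin n)) : SimpleGraph (Fin n) where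
  Adj u v := G.Adj u v ∧ ∀ w, G.Adj u w → ¬ G.Adj v w
  symm := ⟨fun _ _ h => ⟨h.1.symm, fun w h1 h2 => h.2 w h2 h1⟩⟩
  loopless := ⟨fun u h => G.loopless.irrefl u h.1⟩

lemma ncard_nonTri {n : ℕ} (G : SimpleGraph (Fin n)) :
    trCount G + (nonTri G).edgeSet.ncard = G.edgeSet.ncard := by
  have h : (nonTri G).edgeSet = {e ∈ G.edgeSet | ¬ triangularEdge G e} := by
    ext e
    induction e using Sym2.ind with
    | _ u v =>
    simp only [SimpleGraph.mem_edgeSet, Set.mem_ofPred_eq, nonTri, triangularEdge]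
    refine and_congr_right fun huv => ?_
    constructor
    · rintro h ⟨a, b, hab, -, w, h1, h2⟩
      rcases Sym2.eq_iff.1 hab with ⟨rfl, rfl⟩ | ⟨rfl, rfl⟩
      · exact h w h1 h2
      · exact h w h2 h1
    · intro h w h1 h2
      exact h ⟨u, v, rfl, huv, w, h1, h2⟩
  rw [h, trCount, ← Set.ncard_union_eq ?_ (Set.toFinite _) (Set.toFinite _)]
  · congr 1
    ext e
    simp only [Set.mem_union, Set.mem_ofPred_eq]
    tauto
  · rw [Set.disjoint_left]
    rintro e h1 h2
    exact h2.2 h1.2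

lemma exists_graph {n e : ℕ} (he : e ≤ n * (n - 1) / 2) :
    ∃ G : SimpleGraph (Fin n), G.edgeSet.ncard = e := by
  have h1 : (⊤ : SimpleGraph (Fin n)).edgeFinset.card = n * (n - 1) / 2 := by
    rw [SimpleGraph.card_edgeFinset_top_eq_card_choose_two, Fintype.card_fin, Nat.choose_two_right]
  obtain ⟨s, hs, hc⟩ := Finset.exists_subset_card_eq (h1 ▸ he)
  refine ⟨SimpleGraph.fromEdgeSet s, ?_⟩
  rw [SimpleGraph.edgeSet_fromEdgeSet, ← hc, ← Set.ncard_coe_finset]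
  congr 1
  ext e
  simp only [Set.mem_sdiff, Finset.mem_coe, and_iff_left_iff_imp]
  intro he
  have := hs he
  rw [SimpleGraph.mem_edgeFinset] at this
  exact SimpleGraph.not_isDiag_of_mem_edgeSet _ this

/-- For all integers `n ≥ 3` and `e` with `n²/4 < e ≤ n(n-1)/2`, `t(n,e) ≤ Tr(n,e)`. -/
theorem tNum_le_trNum (n e : ℕ) (hn : 3 ≤ n)
    (he1 : (n : ℝ) ^ 2 / 4 < (e : ℝ)) (he2 : e ≤ n * (n - 1) / 2) :
    tNum n e ≤ (TrNum n e : ℝ) := by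
  obtain ⟨G₀, hG₀⟩ := exists_graph he2
  obtain ⟨G, hG, hT⟩ : TrNum n e ∈
      {m : ℕ | ∃ G : SimpleGraph (Fin n), G.edgeSet.ncard = e ∧ trCount G = m} :=
    Nat.sInf_mem ⟨_, G₀, hG₀, rfl⟩
  have hN := ncard_nonTri G
  rw [hG, hT] at hN
  have hN' : (TrNum n e : ℝ) + ((nonTri G).edgeSet.ncard : ℝ) = e := by exact_mod_cast hN
  obtain ⟨a, b, c, ha, hb, hc, hs, h1, h2⟩ := core n (Fin n) (fun _ => 1) G.Adj (nonTri G).Adj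
    (Fintype.card_fin n) (fun _ => zero_le_one)
    ⟨fun _ _ h => h.symm, fun _ _ h => h.symm, fun _ _ h => h.1, fun _ _ w h h1 h2 => h.2 w h1 h2⟩
  rw [bil_adj] at h1 h2
  rw [hG] at h1
  have hs' : a + b + c = (n : ℝ) := by simpa using hs
  have hle : tNum n e ≤ (e : ℝ) - b * c := by
    refine csInf_le ⟨(e : ℝ) - (n : ℝ) ^ 2, ?_⟩ ⟨a, b, c, ha, hb, hc, hs', by linarith, rfl⟩
    rintro y ⟨a', b', c', ha', hb', hc', hs'', -, rfl⟩
    rw [← hs'']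
    nlinarith [mul_nonneg ha' hb', mul_nonneg hb' hc', mul_nonneg ha' hc']
  linarith
end

section
/- Let G be a simple graph on n vertices v₁, …, vₙ, let y ∈ Sₙ, and let v_k and v_h be non-adjacent vertices of G such that Σ{y_ℓ : v_k v_ℓ ∈ E(G)} ≥ Σ{y_ℓ : v_h v_ℓ ∈ E(G)}. Define y′ ∈ ℝⁿ by y′_k = y_k + y_h, y′_h = 0, and y′_ℓ = y_ℓ for ℓ ≠ k, h. Then y′ ∈ Sₙ and f(G, y) ≤ f(G, y′). -/
/-!
With `d = e_k - e_h`, the new weight vector is `y + y_h d`. Expanding the quadratic form of the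
adjacency matrix, the `y_h²` term vanishes because `k` and `h` are non-adjacent, so `f` changes by
`y_h` times the difference of the weighted degrees of `k` and `h` (`fG_add_shift`), which is
nonnegative.
-/

open scoped Classical

/-- `f(G, x) = Σ_{v_i v_j ∈ E(G)} x_i x_j` (each unordered edge counted once). -/
noncomputable def fG {n : ℕ} (G : SimpleGraph (Fin n)) (x : Fin n → ℝ) : ℝ :=
  (∑ i : Fin n, ∑ j : Fin n, if G.Adj i j then x i * x j else 0) / 2

open Matrix in
/-- The weighted edge sum as half the quadratic form of the adjacency matrix. -/
lemma fG_eq_dotProduct {n : ℕ} (G : SimpleGraph (Fin n)) (x : Fin n → ℝ) :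
    fG G x = x ⬝ᵥ (G.adjMatrix ℝ *ᵥ x) / 2 := by
  simp only [fG, dotProduct, Matrix.mulVec, SimpleGraph.adjMatrix_apply, Finset.mul_sum]
  congr 1
  refine Finset.sum_congr rfl fun i _ => Finset.sum_congr rfl fun j _ => ?_
  split_ifs <;> simp

open Matrix in
/-- Shifting weight `t` from `h` to a non-adjacent vertex `k` changes `f` linearly in `t`:
the quadratic term vanishes because none of `kk`, `kh`, `hh` is an edge. -/
lemma fG_add_shift {n : ℕ} (G : SimpleGraph (Fin n)) (y : Fin n → ℝ) (k h : Fin n)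
    (hadj : ¬ G.Adj k h) (t : ℝ) :
    fG G (y + t • (Pi.single k 1 - Pi.single h 1)) =
      fG G y + t * ((∑ ℓ, if G.Adj k ℓ then y ℓ else 0) -
        ∑ ℓ, if G.Adj h ℓ then y ℓ else 0) := by
  have hadj' : ¬ G.Adj h k := fun e => hadj e.symm
  set A := G.adjMatrix ℝ with hA
  set d : Fin n → ℝ := Pi.single k 1 - Pi.single h 1 with hd
  have hrow (i : Fin n) : (A *ᵥ y) i = ∑ ℓ, if G.Adj i ℓ then y ℓ else 0 := by
    simp [hA, Matrix.mulVec, dotProduct, SimpleGraph.adjMatrix_apply]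
  have hlin : d ⬝ᵥ (A *ᵥ y) = (A *ᵥ y) k - (A *ᵥ y) h := by
    simp [hd, sub_dotProduct]
  have hsymm : y ⬝ᵥ (A *ᵥ d) = d ⬝ᵥ (A *ᵥ y) := by
    rw [Matrix.dotProduct_mulVec, ← Matrix.mulVec_transpose, SimpleGraph.transpose_adjMatrix,
      dotProduct_comm]
  have hquad : d ⬝ᵥ (A *ᵥ d) = 0 := by
    simp [hd, hA, sub_dotProduct, Matrix.mulVec_sub, hadj, hadj']
  rw [fG_eq_dotProduct, fG_eq_dotProduct, ← hA, Matrix.mulVec_add, Matrix.mulVec_smul,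
    add_dotProduct, dotProduct_add, dotProduct_add, smul_dotProduct, smul_dotProduct,
    dotProduct_smul, dotProduct_smul, hsymm, hquad, hlin, hrow, hrow]
  simp only [smul_eq_mul]
  ring

/-- Basic symmetrization step: if `v_k` and `v_h` are distinct non-adjacent vertices and the
`y`-weighted degree of `v_k` is at least that of `v_h`, then moving all of the weight of
`v_h` onto `v_k` stays in the simplex and does not decrease `f(G, ·)`. -/
theorem symmetrization_step
    (n : ℕ) (G : SimpleGraph (Fin n)) (y : Fin n → ℝ)
    (hy : y ∈ stdSimplex ℝ (Fin n)) (k h : Fin n) (hkh : k ≠ h)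
    (hadj : ¬ G.Adj k h)
    (hdeg : ∑ ℓ : Fin n, (if G.Adj h ℓ then y ℓ else 0) ≤
      ∑ ℓ : Fin n, (if G.Adj k ℓ then y ℓ else 0)) :
    (fun ℓ => if ℓ = k then y k + y h else if ℓ = h then 0 else y ℓ) ∈
      stdSimplex ℝ (Fin n) ∧
    fG G y ≤ fG G (fun ℓ => if ℓ = k then y k + y h else if ℓ = h then 0 else y ℓ) := by
  have hshift : (fun ℓ => if ℓ = k then y k + y h else if ℓ = h then 0 else y ℓ) =
      y + y h • (Pi.single k 1 - Pi.single h 1) := by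
    funext ℓ
    by_cases h₁ : ℓ = k
    · subst h₁
      simp [hkh]
    · by_cases h₂ : ℓ = h
      · subst h₂
        simp [h₁]
      · simp [h₁, h₂]
  refine ⟨⟨fun ℓ => ?_, ?_⟩, ?_⟩
  · have := hy.1
    dsimp only
    split_ifs
    exacts [add_nonneg (this k) (this h), le_rfl, this ℓ]
  · rw [hshift]
    simp [Finset.sum_add_distrib, ← Finset.mul_sum, Finset.sum_sub_distrib, hy.2]
  · rw [hshift, fG_add_shift G y k h hadj]
    exact le_add_of_nonneg_right (mul_nonneg (hy.1 h) (sub_nonneg.2 hdeg))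
end

section
/- Let G be a triangle-free simple graph on n vertices v₁, …, vₙ. Then for every x ∈ Sₙ we have f(G, x) ≤ 1/4. Equivalently, if G is a simple graph on n vertices and f(G, x) > 1/4 for some x ∈ Sₙ, then G contains a triangle. -/
/-!
Write `d i` for the total weight of the neighbours of `i`, so that `S = ∑ i, x i * d i` equals
`2 f(G, x)`. In a triangle-free graph adjacent vertices have disjoint neighbourhoods, hence
`d i + d j ≤ 1` along every edge. Summing `x i * x j * (d i + d j)` over ordered edges gives
`2 ∑ x i * (d i)^2 ≤ S`, while `(d i - 1/2)^2 ≥ 0` gives `∑ x i * (d i)^2 ≥ S - 1/4`.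
Together `S ≤ 1/2`.
-/

open scoped Classical

/-- The weight of the neighbourhood of `i`. -/
noncomputable def nbrWeight {n : ℕ} (G : SimpleGraph (Fin n)) (x : Fin n → ℝ) (i : Fin n) : ℝ :=
  ∑ j, if G.Adj i j then x j else 0

/-- Adjacent vertices of a triangle-free graph have disjoint neighbourhoods. -/
lemma nbrWeight_add_le {n : ℕ} {G : SimpleGraph (Fin n)} (hG : G.CliqueFree 3)
    {x : Fin n → ℝ} (hx : x ∈ stdSimplex ℝ (Fin n)) {i j : Fin n} (hij : G.Adj i j) :
    nbrWeight G x i + nbrWeight G x j ≤ 1 := by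
  rw [← hx.2, nbrWeight, nbrWeight, ← Finset.sum_add_distrib]
  refine Finset.sum_le_sum fun k _ => ?_
  have hk := hx.1 k
  by_cases h1 : G.Adj i k <;> by_cases h2 : G.Adj j k
  · exact absurd (SimpleGraph.is3Clique_triple_iff.2 ⟨hij, h1, h2⟩) (hG _)
  all_goals simp [h1, h2, hk]

lemma fG_eq {n : ℕ} (G : SimpleGraph (Fin n)) (x : Fin n → ℝ) :
    fG G x = (∑ i, x i * nbrWeight G x i) / 2 := by
  simp only [fG, nbrWeight, Finset.mul_sum, mul_ite, mul_zero]

/-- Both `∑ x i * x j * d i` and `∑ x i * x j * d j` over ordered edges equal `∑ x i * (d i)^2`,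
and `d i + d j ≤ 1` on edges, where `d = nbrWeight G x`. -/
lemma two_mul_sum_sq_le {n : ℕ} {G : SimpleGraph (Fin n)} (hG : G.CliqueFree 3)
    {x : Fin n → ℝ} (hx : x ∈ stdSimplex ℝ (Fin n)) :
    2 * ∑ i, x i * nbrWeight G x i ^ 2 ≤ ∑ i, x i * nbrWeight G x i := by
  have h1 : ∑ i, x i * nbrWeight G x i ^ 2 =
      ∑ i, ∑ j, if G.Adj i j then x i * x j * nbrWeight G x i else 0 := by
    refine Finset.sum_congr rfl fun i _ => ?_
    calc x i * nbrWeight G x i ^ 2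
        = (∑ j, if G.Adj i j then x j else 0) * (x i * nbrWeight G x i) := by
          rw [← nbrWeight]; ring
      _ = _ := by
          rw [Finset.sum_mul]
          refine Finset.sum_congr rfl fun j _ => ?_
          split_ifs <;> ring
  have h2 : ∑ i, x i * nbrWeight G x i ^ 2 =
      ∑ i, ∑ j, if G.Adj i j then x i * x j * nbrWeight G x j else 0 := by
    rw [h1, Finset.sum_comm]
    refine Finset.sum_congr rfl fun i _ => Finset.sum_congr rfl fun j _ => ?_
    rw [G.adj_comm, mul_comm (x j)]
  have h3 : ∑ i, x i * nbrWeight G x i =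
      ∑ i, ∑ j, if G.Adj i j then x i * x j else 0 := by
    simp only [nbrWeight, Finset.mul_sum, mul_ite, mul_zero]
  rw [two_mul]
  nth_rewrite 1 [h1]
  rw [h2, h3, ← Finset.sum_add_distrib]
  refine Finset.sum_le_sum fun i _ => ?_
  rw [← Finset.sum_add_distrib]
  refine Finset.sum_le_sum fun j _ => ?_
  split_ifs with h
  · rw [← mul_add]
    exact mul_le_of_le_one_right (mul_nonneg (hx.1 i) (hx.1 j)) (nbrWeight_add_le hG hx h)
  · simp

lemma fG_le_quarter {n : ℕ} {G : SimpleGraph (Fin n)} (hG : G.CliqueFree 3)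
    {x : Fin n → ℝ} (hx : x ∈ stdSimplex ℝ (Fin n)) : fG G x ≤ 1 / 4 := by
  have h1 := two_mul_sum_sq_le hG hx
  have h2 : ∑ i, (x i * nbrWeight G x i - x i * (1 / 4)) ≤ ∑ i, x i * nbrWeight G x i ^ 2 := by
    refine Finset.sum_le_sum fun i _ => ?_
    nlinarith [mul_nonneg (hx.1 i) (sq_nonneg (nbrWeight G x i - 1 / 2))]
  rw [Finset.sum_sub_distrib, ← Finset.sum_mul, hx.2] at h2
  rw [fG_eq]
  linarith

/-- If `G` is triangle-free, then `f(G, x) ≤ 1/4` for every `x` in the standard simplex;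
equivalently, if `f(G, x) > 1/4` for some `x` in the simplex, `G` contains a triangle. -/
theorem trianglefree_f_le_quarter (n : ℕ) (G : SimpleGraph (Fin n)) :
    (G.CliqueFree 3 → ∀ x ∈ stdSimplex ℝ (Fin n), fG G x ≤ 1 / 4) ∧
    ((∃ x ∈ stdSimplex ℝ (Fin n), 1 / 4 < fG G x) → ¬ G.CliqueFree 3) := by
  exact ⟨fun hG x hx => fG_le_quarter hG hx,
    fun ⟨x, hx, h⟩ hG => (fG_le_quarter hG hx).not_gt h⟩
end
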